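/- Direction-separated families satisfy the linear Wolff axiom: for every n ≥ 2 there exists a constant N = N(n) ≥ 1 such that for every 0 < δ < 1, every finite direction-separated family 𝕋 of δ-tubes in ℝⁿ, and every rectangular box E ⊆ ℝⁿ (that is, E = Φ(∏_{i=1}^{n}[0, s_i]) for some isometry Φ of ℝⁿ and some side lengths s₁, …, s_n > 0), one has #{T ∈ 𝕋 : T ⊆ E} ≤ N · δ^{−(n−1)} · |E|, where |E| denotes Lebesgue measure. -/

import Mathlib

/-!
If a tube with centre `a` and direction `v` lies in `E`, then the tube with the same direction
centred at the origin lies in the difference set `E - E`. Its tip, the part over `(1/4, 1/2)` of the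
axis, has volume comparable to `δ ^ (n - 1)`, and shrinking its radius to `δ / 8` makes the tips of
tubes with `δ`-separated directions disjoint. Hence the number of tubes in `E` is at most a constant
times `δ ^ (-(n - 1)) |E - E|`.

For convex `E` one has `|E - E| ≤ 4 ^ n |E|`: if `x ∈ (E - E) / 2`, then `E ∩ (E - x)` contains a
copy of `E` scaled by `1 / 2`, while the integral of `|E ∩ (E - x)|` over all `x` is `|E| ^ 2`.
-/

open MeasureTheory Metric InnerProductGeometry
open scoped RealInnerProductSpace ENNReal NNReal

noncomputable section

/-- Euclidean space ℝⁿ. -/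
abbrev Esp (n : ℕ) : Type := EuclideanSpace ℝ (Fin n)

/-- The δ-tube with centre `a` and unit direction `v`. -/
def tube (n : ℕ) (δ : ℝ) (a v : Esp n) : Set (Esp n) :=
  {x | |⟪x - a, v⟫| ≤ 1 / 2 ∧ ‖(x - a) - ⟪x - a, v⟫ • v‖ ≤ δ}

section DifferenceBody

open Module (finrank)
open scoped Pointwise

lemma lintegral_measure_inter_preimage_add {G : Type*} [MeasurableSpace G] [AddGroup G]
    [MeasurableAdd₂ G] (μ : Measure G) [SFinite μ] [μ.IsAddRightInvariant] {s t : Set G}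
    (hs : MeasurableSet s) (ht : MeasurableSet t) :
    ∫⁻ x, μ (t ∩ (x + ·) ⁻¹' s) ∂μ = μ s * μ t := by
  have shear := (measurePreserving_add_prod μ μ).measure_preimage (hs.prod ht).nullMeasurableSet
  rw [Measure.prod_prod, Measure.prod_apply
    ((measurePreserving_add_prod μ μ).measurable (hs.prod ht))] at shear
  rw [← shear]
  congr! 3 with x
  rw [Set.inter_comm]
  rfl

lemma measurable_measure_inter_preimage_add {G : Type*} [MeasurableSpace G] [Add G]
    [MeasurableAdd₂ G] (μ : Measure G) [SFinite μ] {s t : Set G}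
    (hs : MeasurableSet s) (ht : MeasurableSet t) :
    Measurable fun x ↦ μ (t ∩ (x + ·) ⁻¹' s) :=
  measurable_measure_prodMk_left ((measurable_snd ht).inter (measurable_add hs))

variable {V : Type*} [NormedAddCommGroup V] [NormedSpace ℝ V] [FiniteDimensional ℝ V]
  [MeasurableSpace V] [BorelSpace V] (μ : Measure V) [μ.IsAddHaarMeasure] {s : Set V}

lemma addHaar_le_addHaar_inter_translate_of_mem_half_sub (hs : Convex ℝ s) {x : V}
    (hx : x ∈ (2⁻¹ : ℝ) • (s - s)) :
    ENNReal.ofReal (2⁻¹ ^ finrank ℝ V) * μ s ≤ μ (s ∩ (x + ·) ⁻¹' s) := by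
  obtain ⟨_, ⟨a, ha, b, hb, rfl⟩, rfl⟩ := hx
  have half_homothety_subset :
      AffineMap.homothety b (2⁻¹ : ℝ) '' s ⊆ s ∩ ((2⁻¹ : ℝ) • (a - b) + ·) ⁻¹' s := by
    rintro _ ⟨y, hy, rfl⟩
    have midpoint_mem {c : V} (hc : c ∈ s) : (2⁻¹ : ℝ) • c + (2⁻¹ : ℝ) • y ∈ s :=
      hs hc hy (by norm_num) (by norm_num) (by norm_num)
    refine ⟨?_, ?_⟩
    · convert midpoint_mem hb using 1
      simp only [AffineMap.homothety_apply, vsub_eq_sub, vadd_eq_add]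
      module
    · change _ ∈ s
      convert midpoint_mem ha using 1
      simp only [AffineMap.homothety_apply, vsub_eq_sub, vadd_eq_add]
      module
  calc ENNReal.ofReal (2⁻¹ ^ finrank ℝ V) * μ s
      = μ (AffineMap.homothety b (2⁻¹ : ℝ) '' s) := by
        rw [Measure.addHaar_image_homothety, abs_of_pos (by positivity)]
    _ ≤ _ := measure_mono half_homothety_subset

lemma addHaar_closure_of_convex (hs : Convex ℝ s) : μ (closure s) = μ s := by
  refine le_antisymm ?_ (measure_mono subset_closure)
  rw [closure_eq_self_union_frontier]
  exact (measure_union_le _ _).trans_eq (by rw [hs.addHaar_frontier μ, add_zero])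

lemma addHaar_sub_self_eq_zero_of_convex (hs : Convex ℝ s) (h0 : μ s = 0) : μ (s - s) = 0 := by
  rcases s.eq_empty_or_nonempty with rfl | hne
  · simp
  refine measure_mono_null (vsub_set_subset_vectorSpan ℝ s) (Measure.addHaar_submodule μ _ ?_)
  rw [ne_eq, ← AffineSubspace.affineSpan_eq_top_iff_vectorSpan_eq_top_of_nonempty ℝ V V hne,
    ← hs.interior_nonempty_iff_affineSpan_eq_top]
  exact fun hint ↦ (Measure.measure_pos_of_nonempty_interior μ hint).ne' h0

/-- A weak form of the Rogers–Shephard inequality, whose sharp constant is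
`(2 * finrank ℝ V).choose (finrank ℝ V)`. -/
lemma addHaar_sub_self_le_of_convex (hs : Convex ℝ s) :
    μ (s - s) ≤ 4 ^ finrank ℝ V * μ s := by
  wlog hclosed : IsClosed s generalizing s
  · calc μ (s - s) ≤ μ (closure s - closure s) :=
          measure_mono (Set.sub_subset_sub subset_closure subset_closure)
      _ ≤ 4 ^ finrank ℝ V * μ s := by
          rw [← addHaar_closure_of_convex μ hs]
          exact this hs.closure isClosed_closure
  rcases eq_or_ne (μ s) 0 with h0 | h0
  · simp [addHaar_sub_self_eq_zero_of_convex μ hs h0]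
  rcases eq_or_ne (μ s) ∞ with htop | htop
  · simp [htop]
  set c := ENNReal.ofReal (2⁻¹ ^ finrank ℝ V)
  have hc : c * c * 4 ^ finrank ℝ V = 1 := by
    rw [← ENNReal.ofReal_ofNat, ← ENNReal.ofReal_pow (by norm_num),
      ← ENNReal.ofReal_mul (by positivity), ← ENNReal.ofReal_mul (by positivity), ← mul_pow,
      ← mul_pow]
    norm_num
  have double_count : c * μ s * (c * μ (s - s)) ≤ μ s * μ s :=
    calc c * μ s * (c * μ (s - s))
        = c * μ s * μ ((2⁻¹ : ℝ) • (s - s)) := by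
          rw [Measure.addHaar_smul_of_nonneg μ (by norm_num)]
      _ ≤ c * μ s * μ {x | c * μ s ≤ μ (s ∩ (x + ·) ⁻¹' s)} := by
          gcongr
          exact fun x ↦ addHaar_le_addHaar_inter_translate_of_mem_half_sub μ hs
      _ ≤ ∫⁻ x, μ (s ∩ (x + ·) ⁻¹' s) ∂μ := mul_meas_ge_le_lintegral
          (measurable_measure_inter_preimage_add μ hclosed.measurableSet hclosed.measurableSet) _
      _ = μ s * μ s := lintegral_measure_inter_preimage_add μ hclosed.measurableSet
          hclosed.measurableSet
  refine (ENNReal.mul_le_mul_iff_right h0 htop).1 ?_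
  calc μ s * μ (s - s) = 4 ^ finrank ℝ V * (c * μ s * (c * μ (s - s))) := by
        rw [← one_mul (μ s * _), ← hc]
        ring
    _ ≤ 4 ^ finrank ℝ V * (μ s * μ s) := by gcongr
    _ = μ s * (4 ^ finrank ℝ V * μ s) := by ring

end DifferenceBody

section AxialContraction

open Module (finrank)

variable {V : Type*} [NormedAddCommGroup V] [InnerProductSpace ℝ V]

/-- The linear map that fixes the unit vector `v` and scales its orthogonal complement by `δ ≠ 0`,
written as a multiple of a transvection because the determinant of the latter is known. -/
def axialContraction (δ : ℝ) (v : V) : V →ₗ[ℝ] V :=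
  δ • LinearMap.transvection (innerₗ V v) ((δ⁻¹ - 1) • v)

lemma axialContraction_apply {δ : ℝ} (hδ : δ ≠ 0) (v x : V) :
    axialContraction δ v x = δ • (x - ⟪x, v⟫ • v) + ⟪x, v⟫ • v := by
  simp only [axialContraction, LinearMap.smul_apply, LinearMap.transvection.apply,
    innerₗ_apply_apply, real_inner_comm x v]
  match_scalars <;> field_simp
  ring

lemma det_axialContraction [FiniteDimensional ℝ V] {δ : ℝ} (hδ : 0 < δ) {v : V} (hv : ‖v‖ = 1) :
    LinearMap.det (axialContraction δ v) = δ ^ ((finrank ℝ V : ℝ) - 1) := by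
  have inner_eq : innerₗ V v ((δ⁻¹ - 1) • v) = δ⁻¹ - 1 := by
    simp [hv]
  rw [axialContraction, LinearMap.det_smul, LinearMap.transvection.det, inner_eq,
    Real.rpow_sub_one hδ.ne', Real.rpow_natCast]
  ring

end AxialContraction

section TubeTip

open Module (finrank)

variable {V : Type*} [NormedAddCommGroup V] [InnerProductSpace ℝ V]

/-- The outer part of the tube of radius `δ / 8` around the axis `v` through the origin. It keeps
away from the origin so that the tips of tubes with `δ`-separated directions are disjoint. -/
def tubeTip (δ : ℝ) (v : V) : Set V :=
  {x | ⟪x, v⟫ ∈ Set.Ioo (1 / 4) (1 / 2) ∧ ‖x - ⟪x, v⟫ • v‖ < δ / 8}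

lemma isOpen_tubeTip (δ : ℝ) (v : V) : IsOpen (tubeTip δ v) :=
  (isOpen_Ioo.preimage (show Continuous fun x : V ↦ ⟪x, v⟫ by fun_prop)).inter
    (isOpen_lt (show Continuous fun x : V ↦ ‖x - ⟪x, v⟫ • v‖ by fun_prop) continuous_const)

lemma mul_norm_sub_sq_le_norm_smul_sub_smul_sq {v w : V} (hv : ‖v‖ = 1) (hw : ‖w‖ = 1) (r t : ℝ) :
    r * t * ‖v - w‖ ^ 2 ≤ ‖r • v - t • w‖ ^ 2 := by
  rw [norm_sub_sq_real, norm_sub_sq_real, norm_smul, norm_smul, mul_pow, mul_pow, hv, hw,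
    real_inner_smul_left, real_inner_smul_right, Real.norm_eq_abs, Real.norm_eq_abs, sq_abs, sq_abs]
  nlinarith [sq_nonneg (r - t)]

lemma disjoint_tubeTip {δ : ℝ} {v w : V} (hv : ‖v‖ = 1) (hw : ‖w‖ = 1) (hvw : δ ≤ ‖v - w‖) :
    Disjoint (tubeTip δ v) (tubeTip δ w) := by
  refine Set.disjoint_left.2 fun x ⟨⟨hv4, _⟩, hvx⟩ ⟨⟨hw4, _⟩, hwx⟩ ↦ hvw.not_gt ?_
  have axial_close : ‖⟪x, v⟫ • v - ⟪x, w⟫ • w‖ < δ / 4 :=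
    calc ‖⟪x, v⟫ • v - ⟪x, w⟫ • w‖ = ‖(x - ⟪x, w⟫ • w) - (x - ⟪x, v⟫ • v)‖ := by congr 1; abel
      _ ≤ ‖x - ⟪x, w⟫ • w‖ + ‖x - ⟪x, v⟫ • v‖ := norm_sub_le _ _
      _ < δ / 4 := by linarith
  have hδ : 0 < δ / 4 := (norm_nonneg _).trans_lt axial_close
  have dist_sq : (‖v - w‖ / 4) ^ 2 < (δ / 4) ^ 2 :=
    calc (‖v - w‖ / 4) ^ 2 = 1 / 4 * (1 / 4) * ‖v - w‖ ^ 2 := by ring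
      _ ≤ ⟪x, v⟫ * ⟪x, w⟫ * ‖v - w‖ ^ 2 := by gcongr
      _ ≤ ‖⟪x, v⟫ • v - ⟪x, w⟫ • w‖ ^ 2 := mul_norm_sub_sq_le_norm_smul_sub_smul_sq hv hw _ _
      _ < (δ / 4) ^ 2 := by gcongr
  linarith [lt_of_pow_lt_pow_left₀ 2 hδ.le dist_sq]

lemma norm_sub_inner_smul_le {v : V} (hv : ‖v‖ = 1) (x : V) : ‖x - ⟪x, v⟫ • v‖ ≤ ‖x‖ := by
  refine le_of_pow_le_pow_left₀ two_ne_zero (norm_nonneg x) ?_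
  rw [norm_sub_sq_real, real_inner_smul_right, norm_smul, hv, Real.norm_eq_abs, mul_one, sq_abs]
  linarith [sq_nonneg ⟪x, v⟫]

lemma axialContraction_image_ball_subset_tubeTip {δ : ℝ} (hδ : 0 < δ) {v : V} (hv : ‖v‖ = 1) :
    axialContraction δ v '' ball ((3 / 8 : ℝ) • v) (1 / 8) ⊆ tubeTip δ v := by
  rintro _ ⟨x, hx, rfl⟩
  have hvv : ⟪v, v⟫ = 1 := by rw [real_inner_self_eq_norm_sq, hv, one_pow]
  have inner_eq : ⟪axialContraction δ v x, v⟫ = ⟪x, v⟫ := by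
    rw [axialContraction_apply hδ.ne', inner_add_left, real_inner_smul_left, inner_sub_left,
      real_inner_smul_left, hvv]
    ring
  have axial : |⟪x, v⟫ - 3 / 8| < 1 / 8 :=
    calc |⟪x, v⟫ - 3 / 8| = |⟪x - (3 / 8 : ℝ) • v, v⟫| := by
          rw [inner_sub_left, real_inner_smul_left, hvv, mul_one]
      _ ≤ ‖x - (3 / 8 : ℝ) • v‖ := by
          simpa [hv] using abs_real_inner_le_norm (x - (3 / 8 : ℝ) • v) v
      _ < 1 / 8 := mem_ball_iff_norm.1 hx
  have radial : ‖x - ⟪x, v⟫ • v‖ < 1 / 8 :=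
    calc ‖x - ⟪x, v⟫ • v‖ = ‖(x - (3 / 8 : ℝ) • v) - ⟪x - (3 / 8 : ℝ) • v, v⟫ • v‖ := by
          rw [inner_sub_left, real_inner_smul_left, hvv]
          congr 1
          module
      _ ≤ ‖x - (3 / 8 : ℝ) • v‖ := norm_sub_inner_smul_le hv _
      _ < 1 / 8 := mem_ball_iff_norm.1 hx
  refine ⟨?_, ?_⟩
  · rw [inner_eq]
    constructor <;> linarith [abs_lt.1 axial]
  · rw [inner_eq, axialContraction_apply hδ.ne', add_sub_cancel_right, norm_smul,
      Real.norm_of_nonneg hδ.le]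
    linarith [mul_lt_mul_of_pos_left radial hδ]

lemma le_addHaar_tubeTip [FiniteDimensional ℝ V] [MeasurableSpace V] [BorelSpace V]
    (μ : Measure V) [μ.IsAddHaarMeasure] {δ : ℝ} (hδ : 0 < δ) {v : V} (hv : ‖v‖ = 1) :
    ENNReal.ofReal (δ ^ ((finrank ℝ V : ℝ) - 1)) * μ (ball 0 (1 / 8)) ≤ μ (tubeTip δ v) :=
  calc ENNReal.ofReal (δ ^ ((finrank ℝ V : ℝ) - 1)) * μ (ball 0 (1 / 8))
      = μ (axialContraction δ v '' ball ((3 / 8 : ℝ) • v) (1 / 8)) := by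
        rw [Measure.addHaar_image_linearMap, det_axialContraction hδ hv,
          abs_of_pos (Real.rpow_pos_of_pos hδ _), Measure.addHaar_ball_center μ (_ • v)]
    _ ≤ μ (tubeTip δ v) := measure_mono (axialContraction_image_ball_subset_tubeTip hδ hv)

end TubeTip

section Counting

open scoped Pointwise

variable {n : ℕ} {δ : ℝ}

lemma tubeTip_subset_sub_self_of_tube_subset (hδ : 0 ≤ δ) {a v : Esp n} {E : Set (Esp n)}
    (hE : tube n δ a v ⊆ E) : tubeTip δ v ⊆ E - E := by
  rintro x ⟨⟨hx4, hx2⟩, hxδ⟩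
  have centre_mem : a ∈ tube n δ a v := by simp [tube, hδ]
  have translate_mem : a + x ∈ tube n δ a v := by
    simp only [tube, Set.mem_ofPred_eq, add_sub_cancel_left]
    exact ⟨abs_le.2 ⟨by linarith, hx2.le⟩, by linarith⟩
  exact ⟨a + x, hE translate_mem, a, hE centre_mem, add_sub_cancel_left a x⟩

lemma natCard_mul_le_volume_sub_self (hδ : 0 < δ) {ι : Type*} [Finite ι] {a v : ι → Esp n}
    (hv : ∀ i, ‖v i‖ = 1) (hsep : Pairwise fun i j ↦ δ ≤ ‖v i - v j‖) {E : Set (Esp n)}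
    (hE : ∀ i, tube n δ (a i) (v i) ⊆ E) :
    Nat.card ι * (ENNReal.ofReal (δ ^ ((n : ℝ) - 1)) * volume (ball (0 : Esp n) (1 / 8))) ≤
      volume (E - E) := by
  have := Fintype.ofFinite ι
  calc Nat.card ι * (ENNReal.ofReal (δ ^ ((n : ℝ) - 1)) * volume (ball (0 : Esp n) (1 / 8)))
      ≤ ∑ i, volume (tubeTip δ (v i)) := by
        rw [Nat.card_eq_fintype_card, ← nsmul_eq_mul]
        refine Finset.card_nsmul_le_sum _ _ _ fun i _ ↦ ?_
        simpa only [finrank_euclideanSpace_fin] using le_addHaar_tubeTip volume hδ (hv i)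
    _ = volume (⋃ i, tubeTip δ (v i)) := by
        rw [measure_iUnion (fun i j hij ↦ disjoint_tubeTip (hv i) (hv j) (hsep hij))
          fun i ↦ (isOpen_tubeTip δ (v i)).measurableSet, tsum_fintype]
    _ ≤ volume (E - E) := measure_mono <| Set.iUnion_subset fun i ↦
        tubeTip_subset_sub_self_of_tube_subset hδ.le (hE i)

/-- The constant of the Wolff axiom for convex sets: the loss in passing to the difference body,
divided by the volume of the ball that is contracted into a tube tip. -/
def wolffConst (n : ℕ) : ℝ :=
  max 1 (4 ^ n / volume.real (ball (0 : Esp n) (1 / 8)))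

lemma four_pow_le_wolffConst_mul (n : ℕ) :
    (4 : ℝ≥0∞) ^ n ≤ ENNReal.ofReal (wolffConst n) * volume (ball (0 : Esp n) (1 / 8)) := by
  have ball_pos : 0 < volume.real (ball (0 : Esp n) (1 / 8)) :=
    ENNReal.toReal_pos (measure_ball_pos _ _ (by norm_num)).ne' measure_ball_lt_top.ne
  rw [← ofReal_measureReal measure_ball_lt_top.ne, ← ENNReal.ofReal_mul' ball_pos.le,
    ← ENNReal.ofReal_ofNat, ← ENNReal.ofReal_pow (by norm_num)]
  exact ENNReal.ofReal_le_ofReal ((div_le_iff₀ ball_pos).1 (le_max_right _ _))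

lemma natCard_le_of_convex (hδ : 0 < δ) {ι : Type*} [Finite ι] {a v : ι → Esp n}
    (hv : ∀ i, ‖v i‖ = 1) (hsep : Pairwise fun i j ↦ δ ≤ ‖v i - v j‖) {E : Set (Esp n)}
    (hE : Convex ℝ E) (htube : ∀ i, tube n δ (a i) (v i) ⊆ E) :
    Nat.card ι ≤ ENNReal.ofReal (wolffConst n * δ ^ (-((n : ℝ) - 1))) * volume E := by
  set c := volume (ball (0 : Esp n) (1 / 8))
  set p := ENNReal.ofReal (δ ^ ((n : ℝ) - 1)) with hp
  set q := ENNReal.ofReal (δ ^ (-((n : ℝ) - 1))) with hq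
  have hc : c ≠ 0 := (measure_ball_pos _ _ (by norm_num)).ne'
  have hpq : p * q = 1 := by
    rw [hp, hq, ← ENNReal.ofReal_mul (by positivity), ← Real.rpow_add hδ, add_neg_cancel,
      Real.rpow_zero, ENNReal.ofReal_one]
  have difference_body : volume (E - E) ≤ 4 ^ n * volume E := by
    simpa only [finrank_euclideanSpace_fin] using addHaar_sub_self_le_of_convex volume hE
  have count_mul : Nat.card ι * p ≤ ENNReal.ofReal (wolffConst n) * volume E := by
    refine (ENNReal.mul_le_mul_iff_left hc measure_ball_lt_top.ne).1 ?_
    calc Nat.card ι * p * c = Nat.card ι * (p * c) := mul_assoc _ _ _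
      _ ≤ volume (E - E) := natCard_mul_le_volume_sub_self hδ hv hsep htube
      _ ≤ 4 ^ n * volume E := difference_body
      _ ≤ ENNReal.ofReal (wolffConst n) * c * volume E := by
          gcongr
          exact four_pow_le_wolffConst_mul n
      _ = ENNReal.ofReal (wolffConst n) * volume E * c := mul_right_comm _ _ _
  calc (Nat.card ι : ℝ≥0∞) = Nat.card ι * p * q := by rw [mul_assoc, hpq, mul_one]
    _ ≤ ENNReal.ofReal (wolffConst n) * volume E * q := by gcongr
    _ = ENNReal.ofReal (wolffConst n * δ ^ (-((n : ℝ) - 1))) * volume E := by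
        rw [ENNReal.ofReal_mul' (by positivity), mul_right_comm]

end Counting

lemma convex_image_isometryEquiv {V W : Type*} [NormedAddCommGroup V] [NormedSpace ℝ V]
    [NormedAddCommGroup W] [NormedSpace ℝ W] (Φ : V ≃ᵢ W) {s : Set V} (hs : Convex ℝ s) :
    Convex ℝ (Φ '' s) := by
  rw [← Φ.coeFn_toRealAffineIsometryEquiv]
  exact hs.affine_image Φ.toRealAffineIsometryEquiv.toAffineEquiv.toAffineMap

lemma convex_setOf_forall_apply_mem {ι : Type*} {K : ι → Set ℝ} (hK : ∀ i, Convex ℝ (K i)) :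
    Convex ℝ {x : EuclideanSpace ℝ ι | ∀ i, x i ∈ K i} := by
  intro x hx y hy a b ha hb hab i
  exact hK i (hx i) (hy i) ha hb hab

theorem statement11_general (n : ℕ) :
    ∃ N : ℝ, 1 ≤ N ∧
      ∀ (δ : ℝ), 0 < δ →
      ∀ {ι : Type*} [Finite ι] (a v : ι → Esp n),
        (∀ i, ‖v i‖ = 1) →
        (∀ i j, i ≠ j → δ ≤ ‖v i - v j‖) →
      ∀ E : Set (Esp n), Convex ℝ E →
        (Nat.card {i : ι // tube n δ (a i) (v i) ⊆ E} : ℝ≥0∞) ≤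
          ENNReal.ofReal (N * δ ^ (-((n : ℝ) - 1))) * volume E :=
  ⟨wolffConst n, le_max_left _ _, fun δ hδ ι _ a v hv hsep E hE ↦
    natCard_le_of_convex hδ (a := fun i : {i : ι // tube n δ (a i) (v i) ⊆ E} ↦ a i)
      (fun i ↦ hv i) (fun i j hij ↦ hsep i j (Subtype.coe_injective.ne hij)) hE fun i ↦ i.2⟩

/-- Direction-separated families satisfy the linear Wolff axiom: for every `n ≥ 2` there
is `N = N(n) ≥ 1` such that for every `0 < δ < 1`, every direction-separated family of
δ-tubes and every rectangular box `E = Φ(Π_i [0, s_i])` (`Φ` an isometry of ℝⁿ),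
`#{T ∈ 𝕋 : T ⊆ E} ≤ N δ^{−(n−1)} |E|`. -/
theorem statement11 (n : ℕ) (hn : 2 ≤ n) :
    ∃ N : ℝ, 1 ≤ N ∧
      ∀ (δ : ℝ), 0 < δ → δ < 1 →
      ∀ (m : ℕ) (a v : Fin m → Esp n),
        (∀ i, ‖v i‖ = 1) →
        (∀ i j, i ≠ j → δ ≤ ‖v i - v j‖) →
      ∀ (Φ : Esp n ≃ᵢ Esp n) (s : Fin n → ℝ), (∀ i, 0 < s i) →
        (Nat.card {i : Fin m //
            tube n δ (a i) (v i) ⊆ Φ '' {x : Esp n | ∀ i', x i' ∈ Set.Icc 0 (s i')}} : ℝ≥0∞) ≤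
          ENNReal.ofReal (N * δ ^ (-((n : ℝ) - 1))) *
            volume (Φ '' {x : Esp n | ∀ i', x i' ∈ Set.Icc 0 (s i')}) := by
  obtain ⟨N, hN, wolff⟩ := statement11_general n
  exact ⟨N, hN, fun δ hδ _ m a v hv hsep Φ s _ ↦ wolff δ hδ a v hv hsep _
    (convex_image_isometryEquiv Φ (convex_setOf_forall_apply_mem fun i ↦ convex_Icc 0 (s i)))⟩

end
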